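/- arXiv:0712.2631 — 2 statements merged into one kernel-verified Lean document; each statement's English description precedes it below -/
import Mathlib

section
/- Let n ≥ 1, p ≥ 1, and let K, T ⊂ ℝ^{2n} be convex bodies containing the origin. Then c(K+ₚT)^{p/2} ≥ c(K)^{p/2} + c(T)^{p/2}. -/
open MeasureTheory Real Set Filter intervalIntegral Metric
open scoped InnerProductSpace Topology Pointwise

noncomputable section

/-- The phase space `ℝ^{2n}`. -/
abbrev E (n : ℕ) := EuclideanSpace ℝ (Fin (2 * n))

/-- The standard complex structure `J` on `ℝ^{2n}`, given in coordinates
`(x₁,y₁,…,xₙ,yₙ)` by `J(x₁,y₁,…,xₙ,yₙ) = (−y₁,x₁,…,−yₙ,xₙ)`. -/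
def Jmap (n : ℕ) (v : E n) : E n := WithLp.toLp 2 fun i =>
  if _h : i.val % 2 = 0 then -v ⟨i.val + 1, by have := i.isLt; omega⟩
  else v ⟨i.val - 1, by have := i.isLt; omega⟩

/-- The support function `h_K(u) = sup_{x ∈ K} ⟨x, u⟩`. -/
def suppFn (n : ℕ) (K : Set (E n)) (u : E n) : ℝ :=
  sSup ((fun x => ⟪x, u⟫_ℝ) '' K)

/-- A convex body: a compact convex set with nonempty interior. -/
def IsConvexBody (n : ℕ) (K : Set (E n)) : Prop :=
  IsCompact K ∧ Convex ℝ K ∧ (interior K).Nonempty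

/-- Membership in the loop space `𝓔_p`: the pair `(z, dz)` represents an absolutely
continuous `2π`-periodic loop `z` with derivative `dz ∈ L^p([0,2π])`, mean zero and
normalized action `(1/2)∫₀^{2π} ⟨J z, ż⟩ = 1`. -/
def InE (n : ℕ) (p : ℝ) (z dz : ℝ → E n) : Prop :=
  Function.Periodic z (2 * π) ∧
  (∀ a b : ℝ, IntervalIntegrable dz volume a b) ∧
  (∀ t, z t = z 0 + ∫ s in (0:ℝ)..t, dz s) ∧
  MemLp dz (ENNReal.ofReal p) (volume.restrict (Set.Ioc (0:ℝ) (2 * π))) ∧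
  (∫ t in (0:ℝ)..(2 * π), z t) = 0 ∧
  (1 / 2) * ∫ t in (0:ℝ)..(2 * π), ⟪Jmap n (z t), dz t⟫_ℝ = 1

/-- The (Ekeland–Hofer–Zehnder) capacity of a convex body,
`c(S) = (π · inf_{z ∈ 𝓔₂} (1/2π) ∫₀^{2π} h_S(ż(t)) dt)²`. -/
def capacity (n : ℕ) (S : Set (E n)) : ℝ :=
  (π * sInf { r : ℝ | ∃ z dz : ℝ → E n, InE n 2 z dz ∧
      r = (1 / (2 * π)) * ∫ t in (0:ℝ)..(2 * π), suppFn n S (dz t) }) ^ 2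

/-- The action `𝒜(γ) = (1/2) ∫₀^{T₀} ⟨−Jγ̇(t), γ(t)⟩ dt` of a `T₀`-periodic curve. -/
def action (n : ℕ) (γ : ℝ → E n) (T₀ : ℝ) : ℝ :=
  (1 / 2) * ∫ t in (0:ℝ)..T₀, ⟪-Jmap n (deriv γ t), γ t⟫_ℝ

/-- A closed characteristic on `∂K`: a nonconstant `T₀`-periodic `C¹` curve lying on
`∂K` satisfying `γ̇ = d·J∇F(γ)` for some `d > 0`, where `F = ‖·‖_K²`. -/
def IsClosedCharacteristic (n : ℕ) (K : Set (E n)) (γ : ℝ → E n) (T₀ : ℝ) : Prop :=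
  0 < T₀ ∧ Function.Periodic γ T₀ ∧ ContDiff ℝ 1 γ ∧ (∃ s t, γ s ≠ γ t) ∧
  (∀ t, γ t ∈ frontier K) ∧
  ∃ d : ℝ, 0 < d ∧ ∀ t, deriv γ t = d • Jmap n (gradient (fun x => gauge K x ^ 2) (γ t))

/-- A capacity carrier of `K`: a closed characteristic on `∂K` of minimal action. -/
def IsCapacityCarrier (n : ℕ) (K : Set (E n)) (γ : ℝ → E n) (T₀ : ℝ) : Prop :=
  IsClosedCharacteristic n K γ T₀ ∧
  ∀ γ' T₀', IsClosedCharacteristic n K γ' T₀' → action n γ T₀ ≤ action n γ' T₀'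

/-- The minimal action of a closed characteristic on `∂K`. -/
def minAction (n : ℕ) (K : Set (E n)) : ℝ :=
  sInf { a : ℝ | ∃ γ T₀, IsClosedCharacteristic n K γ T₀ ∧ a = action n γ T₀ }

/-- `K` has smooth boundary: its gauge function is `C¹` away from the origin. -/
def HasSmoothBoundary (n : ℕ) (K : Set (E n)) : Prop :=
  ContDiffOn ℝ 1 (gauge K) {(0 : E n)}ᶜ

/-- The `p`-sum `K +ₚ T` of Firey: the convex body with support function
`(h_K^p + h_T^p)^{1/p}`. -/
def pSum (n : ℕ) (p : ℝ) (K T : Set (E n)) : Set (E n) :=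
  { x | ∀ u, ⟪x, u⟫_ℝ ≤ (suppFn n K u ^ p + suppFn n T u ^ p) ^ (1 / p) }

/-- The polar body `T° = {x : ⟨x,y⟩ ≤ 1 for all y ∈ T}`. -/
def polarBody (n : ℕ) (T : Set (E n)) : Set (E n) :=
  { x | ∀ y ∈ T, ⟪x, y⟫_ℝ ≤ 1 }

/-- The length `∫₀^{T₀} ‖γ̇(t)‖_B dt` of a curve measured with the gauge of `B`. -/
def lengthIn (n : ℕ) (B : Set (E n)) (γ : ℝ → E n) (T₀ : ℝ) : ℝ :=
  ∫ t in (0:ℝ)..T₀, gauge B (deriv γ t)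

/-- Critical point of the functional `I_p(z) = ∫₀^{2π} h_K^p(ż(t)) dt` on `𝓔_p`. -/
def IsCriticalPoint (n : ℕ) (p : ℝ) (K : Set (E n)) (z dz : ℝ → E n) : Prop :=
  ∀ ξ dξ : ℝ → E n,
    Function.Periodic ξ (2 * π) →
    (∀ a b : ℝ, IntervalIntegrable dξ volume a b) →
    (∀ t, ξ t = ξ 0 + ∫ s in (0:ℝ)..t, dξ s) →
    MemLp dξ (ENNReal.ofReal p) (volume.restrict (Set.Ioc (0:ℝ) (2 * π))) →
    (∫ t in (0:ℝ)..(2 * π), ξ t) = 0 →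
    (∫ t in (0:ℝ)..(2 * π), ⟪ξ t, Jmap n (dz t)⟫_ℝ) = 0 →
    (∫ t in (0:ℝ)..(2 * π), ⟪gradient (fun u => suppFn n K u ^ p) (dz t), dξ t⟫_ℝ) = 0

/-- The rotation-invariant probability measure on the unit sphere of `ℝ^{2n}`. -/
def sphereMeasure (n : ℕ) : Measure (sphere (0 : E n) 1) :=
  ((volume : Measure (E n)).toSphere Set.univ)⁻¹ • (volume : Measure (E n)).toSphere

/-- The mean width parameter `M*(K) = ∫_{S^{2n-1}} h_K dσ`. -/
def meanWidth (n : ℕ) (K : Set (E n)) : ℝ :=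
  ∫ x : sphere (0 : E n) 1, suppFn n K (x : E n) ∂(sphereMeasure n)

/-!
On the `p`-sum the support function is `h_K +ₚ h_T`, because this combination is again sublinear
(Minkowski's inequality in `ℝ²`) and, by Hahn–Banach, a sublinear function is the support function
of the convex set it defines. For a loop `z ∈ 𝓔₂`, the triangle inequality for the integral of the
`ℓ^p(ℝ²)`-valued map `t ↦ (h_K(ż(t)), h_T(ż(t)))` bounds the mean of `h_K +ₚ h_T` from below by the
`p`-sum of the means of `h_K` and `h_T`, hence by the `p`-sum of their infima over `𝓔₂`.
-/

section PAdd

variable {p a b a' b' c : ℝ}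

/-- The `p`-sum `a +ₚ b = (a^p + b^p)^{1/p}` of two nonnegative reals, by which the support
functions of bodies are combined in `pSum`. -/
def pAdd (p a b : ℝ) : ℝ := (a ^ p + b ^ p) ^ (1 / p)

lemma pAdd_nonneg (ha : 0 ≤ a) (hb : 0 ≤ b) : 0 ≤ pAdd p a b := by
  unfold pAdd
  positivity

lemma pAdd_rpow (hp : p ≠ 0) (ha : 0 ≤ a) (hb : 0 ≤ b) : pAdd p a b ^ p = a ^ p + b ^ p := by
  rw [pAdd, one_div, rpow_inv_rpow (by positivity) hp]

lemma pAdd_le_pAdd (hp : 0 ≤ p) (ha : 0 ≤ a) (hb : 0 ≤ b) (haa' : a ≤ a') (hbb' : b ≤ b') :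
    pAdd p a b ≤ pAdd p a' b' := by
  unfold pAdd
  gcongr

lemma pAdd_mul_left (hp : p ≠ 0) (hc : 0 ≤ c) (ha : 0 ≤ a) (hb : 0 ≤ b) :
    pAdd p (c * a) (c * b) = c * pAdd p a b := by
  rw [pAdd, mul_rpow hc ha, mul_rpow hc hb, ← mul_add, mul_rpow (by positivity) (by positivity),
    one_div, rpow_rpow_inv hc hp, pAdd, one_div]

lemma pAdd_eq_norm (hp : 0 < p) (ha : 0 ≤ a) (hb : 0 ≤ b) :
    pAdd p a b = ‖WithLp.toLp (ENNReal.ofReal p) (a, b)‖ := by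
  have hp_toReal : (ENNReal.ofReal p).toReal = p := ENNReal.toReal_ofReal hp.le
  rw [WithLp.prod_norm_eq_add (by rwa [hp_toReal]), hp_toReal]
  simp only [pAdd, WithLp.fst, WithLp.snd, norm_of_nonneg ha, norm_of_nonneg hb]

lemma pAdd_add_le (hp : 1 ≤ p) (ha : 0 ≤ a) (hb : 0 ≤ b) (ha' : 0 ≤ a') (hb' : 0 ≤ b') :
    pAdd p (a + a') (b + b') ≤ pAdd p a b + pAdd p a' b' := by
  have : Fact (1 ≤ ENNReal.ofReal p) := ⟨ENNReal.one_le_ofReal.2 hp⟩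
  have hp0 : 0 < p := by linarith
  rw [pAdd_eq_norm hp0 (add_nonneg ha ha') (add_nonneg hb hb'), pAdd_eq_norm hp0 ha hb,
    pAdd_eq_norm hp0 ha' hb']
  exact norm_add_le (WithLp.toLp (ENNReal.ofReal p) (a, b)) (WithLp.toLp _ (a', b'))

lemma pAdd_integral_le_integral_pAdd {α : Type*} [MeasurableSpace α] {μ : Measure α} {f g : α → ℝ}
    (hp : 1 ≤ p) (hf : Integrable f μ) (hg : Integrable g μ) (hf0 : ∀ t, 0 ≤ f t)
    (hg0 : ∀ t, 0 ≤ g t) :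
    pAdd p (∫ t, f t ∂μ) (∫ t, g t ∂μ) ≤ ∫ t, pAdd p (f t) (g t) ∂μ := by
  have : Fact (1 ≤ ENNReal.ofReal p) := ⟨ENNReal.one_le_ofReal.2 hp⟩
  have hp0 : 0 < p := by linarith
  let toLp : ℝ × ℝ →L[ℝ] WithLp (ENNReal.ofReal p) (ℝ × ℝ) :=
    (WithLp.prodContinuousLinearEquiv (ENNReal.ofReal p) ℝ ℝ ℝ).symm
  calc pAdd p (∫ t, f t ∂μ) (∫ t, g t ∂μ)
      = ‖toLp (∫ t, f t ∂μ, ∫ t, g t ∂μ)‖ :=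
        pAdd_eq_norm hp0 (integral_nonneg hf0) (integral_nonneg hg0)
    _ = ‖∫ t, toLp (f t, g t) ∂μ‖ := by
        rw [← integral_pair hf hg, toLp.integral_comp_comm (hf.prodMk hg)]
    _ ≤ ∫ t, ‖toLp (f t, g t)‖ ∂μ := norm_integral_le_integral_norm _
    _ = ∫ t, pAdd p (f t) (g t) ∂μ :=
        integral_congr_ae <| .of_forall fun t => (pAdd_eq_norm hp0 (hf0 t) (hg0 t)).symm

end PAdd

/-- Sublinear functions on a real vector space: positively homogeneous and subadditive. On `E n`
these are the support functions of nonempty compact convex sets. -/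
structure IsSublinear {V : Type*} [AddCommGroup V] [Module ℝ V] (N : V → ℝ) : Prop where
  map_smul : ∀ c : ℝ, 0 < c → ∀ v, N (c • v) = c * N v
  map_add_le : ∀ u v, N (u + v) ≤ N u + N v

namespace IsSublinear

section Module

variable {V : Type*} [AddCommGroup V] [Module ℝ V] {M N : V → ℝ}

lemma map_zero (hN : IsSublinear N) : N 0 = 0 := by
  have h := hN.map_smul 2 two_pos 0
  rw [smul_zero] at h
  linarith

lemma mul_le_map_smul (hN : IsSublinear N) (c : ℝ) (v : V) : c * N v ≤ N (c • v) := by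
  rcases lt_trichotomy c 0 with hc | rfl | hc
  · have h := hN.map_add_le (c • v) (-c • v)
    rw [← add_smul, add_neg_cancel, zero_smul, hN.map_zero, hN.map_smul (-c) (neg_pos.2 hc)] at h
    linarith
  · rw [zero_mul, zero_smul, hN.map_zero]
  · exact (hN.map_smul c hc v).ge

lemma exists_linearMap_eq (hN : IsSublinear N) (u : V) :
    ∃ g : V →ₗ[ℝ] ℝ, (∀ v, g v ≤ N v) ∧ g u = N u := by
  have hu : ∀ c : ℝ, c • u = 0 → c • N u = 0 := fun c hc => by
    rcases smul_eq_zero.1 hc with rfl | rfl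
    · exact zero_smul ℝ _
    · rw [hN.map_zero, smul_zero]
  let f : V →ₗ.[ℝ] ℝ := LinearPMap.mkSpanSingleton' u (N u) hu
  have hle : ∀ v : f.domain, f v ≤ N v := by
    rintro ⟨v, hv⟩
    obtain ⟨c, rfl⟩ := Submodule.mem_span_singleton.1 hv
    rw [LinearPMap.mkSpanSingleton'_apply]
    exact hN.mul_le_map_smul c u
  obtain ⟨g, hg_extends, hg_le⟩ :=
    exists_extension_of_le_sublinear f N hN.map_smul hN.map_add_le hle
  exact ⟨g, hg_le, (hg_extends ⟨u, Submodule.mem_span_singleton_self u⟩).trans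
    (LinearPMap.mkSpanSingleton'_apply_self u (N u) hu _)⟩

lemma pAdd {p : ℝ} (hp : 1 ≤ p) (hM : IsSublinear M) (hN : IsSublinear N) (hM0 : ∀ v, 0 ≤ M v)
    (hN0 : ∀ v, 0 ≤ N v) : IsSublinear fun v => pAdd p (M v) (N v) where
  map_smul c hc v := by
    rw [hM.map_smul c hc, hN.map_smul c hc, pAdd_mul_left (by positivity) hc.le (hM0 v) (hN0 v)]
  map_add_le u v :=
    (pAdd_le_pAdd (by positivity) (hM0 _) (hN0 _) (hM.map_add_le u v) (hN.map_add_le u v)).trans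
      (pAdd_add_le hp (hM0 u) (hN0 u) (hM0 v) (hN0 v))

end Module

lemma exists_inner_eq {V : Type*} [NormedAddCommGroup V] [InnerProductSpace ℝ V]
    [FiniteDimensional ℝ V] {N : V → ℝ} (hN : IsSublinear N) (u : V) :
    ∃ x : V, (∀ v, ⟪x, v⟫_ℝ ≤ N v) ∧ ⟪x, u⟫_ℝ = N u := by
  obtain ⟨g, hg_le, hgu⟩ := hN.exists_linearMap_eq u
  have := FiniteDimensional.complete ℝ V
  refine ⟨(InnerProductSpace.toDual ℝ V).symm (LinearMap.toContinuousLinearMap g), ?_, ?_⟩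
  · simpa using hg_le
  · simpa using hgu

lemma lipschitzWith {V : Type*} [NormedAddCommGroup V] [NormedSpace ℝ V] {N : V → ℝ}
    (hN : IsSublinear N) {R : NNReal} (hR : ∀ v, N v ≤ R * ‖v‖) : LipschitzWith R N :=
  .of_le_add_mul R fun u v => calc
    N u = N (v + (u - v)) := by rw [add_sub_cancel]
    _ ≤ N v + N (u - v) := hN.map_add_le v (u - v)
    _ ≤ N v + R * dist u v := by
      rw [dist_eq_norm]
      gcongr
      exact hR (u - v)

end IsSublinear

section SupportFunction

variable {n : ℕ} {K T : Set (E n)} {p : ℝ}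

lemma suppFn_nonneg (h0 : 0 ∈ K) (u : E n) : 0 ≤ suppFn n K u :=
  Real.sSup_nonneg' ⟨0, ⟨0, h0, inner_zero_left u⟩, le_rfl⟩

lemma suppFn_le {u : E n} {c : ℝ} (hne : K.Nonempty) (h : ∀ x ∈ K, ⟪x, u⟫_ℝ ≤ c) :
    suppFn n K u ≤ c :=
  csSup_le (hne.image _) (forall_mem_image.2 h)

lemma inner_le_suppFn {x : E n} (hK : Bornology.IsBounded K) (hx : x ∈ K) (u : E n) :
    ⟪x, u⟫_ℝ ≤ suppFn n K u := by
  obtain ⟨R, hR⟩ := hK.exists_norm_le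
  refine le_csSup ⟨R * ‖u‖, forall_mem_image.2 fun y hy => ?_⟩ (mem_image_of_mem _ hx)
  exact (real_inner_le_norm y u).trans (by gcongr; exact hR y hy)

lemma suppFn_smul {c : ℝ} (hc : 0 ≤ c) (u : E n) : suppFn n K (c • u) = c * suppFn n K u := by
  have himage : (fun x => ⟪x, c • u⟫_ℝ) '' K = c • ((fun x => ⟪x, u⟫_ℝ) '' K) := by
    simp only [inner_smul_right, ← image_smul, image_image, smul_eq_mul]
  rw [suppFn, himage, Real.sSup_smul_of_nonneg hc, smul_eq_mul, suppFn]

lemma isSublinear_suppFn (hK : Bornology.IsBounded K) (hne : K.Nonempty) :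
    IsSublinear (suppFn n K) where
  map_smul _ hc u := suppFn_smul hc.le u
  map_add_le u v := suppFn_le hne fun x hx => by
    rw [inner_add_right]
    exact add_le_add (inner_le_suppFn hK hx u) (inner_le_suppFn hK hx v)

lemma exists_lipschitzWith_suppFn (hK : Bornology.IsBounded K) (hne : K.Nonempty) :
    ∃ R, LipschitzWith R (suppFn n K) := by
  obtain ⟨R, hR_pos, hR⟩ := hK.exists_pos_norm_le
  lift R to NNReal using hR_pos.le
  refine ⟨R, (isSublinear_suppFn hK hne).lipschitzWith fun u => suppFn_le hne fun x hx => ?_⟩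
  exact (real_inner_le_norm x u).trans (by gcongr; exact hR x hx)

lemma suppFn_setOf_inner_le {N : E n → ℝ} (hN : IsSublinear N) :
    suppFn n {x | ∀ v, ⟪x, v⟫_ℝ ≤ N v} = N := by
  funext u
  obtain ⟨x, hx, hxu⟩ := hN.exists_inner_eq u
  exact IsGreatest.csSup_eq ⟨⟨x, hx, hxu⟩, forall_mem_image.2 fun y hy => hy u⟩

lemma zero_mem_pSum (h0K : 0 ∈ K) (h0T : 0 ∈ T) : 0 ∈ pSum n p K T := fun u => by
  rw [inner_zero_left]
  exact pAdd_nonneg (suppFn_nonneg h0K u) (suppFn_nonneg h0T u)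

lemma suppFn_pSum (hp : 1 ≤ p) (hK : Bornology.IsBounded K) (hT : Bornology.IsBounded T)
    (h0K : 0 ∈ K) (h0T : 0 ∈ T) :
    suppFn n (pSum n p K T) = fun u => pAdd p (suppFn n K u) (suppFn n T u) :=
  suppFn_setOf_inner_le <| (isSublinear_suppFn hK ⟨0, h0K⟩).pAdd hp
    (isSublinear_suppFn hT ⟨0, h0T⟩) (suppFn_nonneg h0K) (suppFn_nonneg h0T)

variable {α : Type*} [MeasurableSpace α] {μ : Measure α} {f : α → E n}

lemma integrable_suppFn_comp (hK : Bornology.IsBounded K) (hne : K.Nonempty)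
    (hf : Integrable f μ) : Integrable (fun t => suppFn n K (f t)) μ := by
  obtain ⟨R, hR⟩ := exists_lipschitzWith_suppFn hK hne
  rw [← memLp_one_iff_integrable] at hf ⊢
  exact hR.comp_memLp (isSublinear_suppFn hK hne).map_zero hf

lemma pAdd_integral_suppFn_le (hp : 1 ≤ p) (hK : Bornology.IsBounded K)
    (hT : Bornology.IsBounded T) (h0K : 0 ∈ K) (h0T : 0 ∈ T) (hf : Integrable f μ) :
    pAdd p (∫ t, suppFn n K (f t) ∂μ) (∫ t, suppFn n T (f t) ∂μ) ≤
      ∫ t, suppFn n (pSum n p K T) (f t) ∂μ := by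
  rw [suppFn_pSum hp hK hT h0K h0T]
  exact pAdd_integral_le_integral_pAdd hp (integrable_suppFn_comp hK ⟨0, h0K⟩ hf)
    (integrable_suppFn_comp hT ⟨0, h0T⟩ hf) (fun t => suppFn_nonneg h0K _)
    (fun t => suppFn_nonneg h0T _)

end SupportFunction

section EllipticLoop

variable {V : Type*} [NormedAddCommGroup V] [NormedSpace ℝ V]

/-- The loop `t ↦ cos t · a + sin t · b`, an ellipse. A circular one witnesses that the loop
spaces `𝓔_p` are nonempty. -/
def ellipticLoop (a b : V) (t : ℝ) : V := cos t • a + sin t • b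

lemma periodic_ellipticLoop (a b : V) :
    Function.Periodic (ellipticLoop a b) (2 * π) := fun t => by
  simp only [ellipticLoop, cos_add_two_pi, sin_add_two_pi]

lemma continuous_ellipticLoop (a b : V) : Continuous (ellipticLoop a b) := by
  unfold ellipticLoop
  fun_prop

lemma hasDerivAt_ellipticLoop (a b : V) (t : ℝ) :
    HasDerivAt (ellipticLoop a b) (ellipticLoop b (-a) t) t := by
  refine (((hasDerivAt_cos t).smul_const a).add ((hasDerivAt_sin t).smul_const b)).congr_deriv ?_
  rw [ellipticLoop, neg_smul, smul_neg, add_comm]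

lemma integral_ellipticLoop [CompleteSpace V] (a b : V) (s t : ℝ) :
    ∫ r in s..t, ellipticLoop b (-a) r = ellipticLoop a b t - ellipticLoop a b s :=
  integral_eq_sub_of_hasDerivAt (fun r _ => hasDerivAt_ellipticLoop a b r)
    ((continuous_ellipticLoop _ _).intervalIntegrable _ _)

lemma integral_period_ellipticLoop [CompleteSpace V] (a b : V) :
    ∫ t in (0 : ℝ)..(2 * π), ellipticLoop a b t = 0 := by
  have h := integral_ellipticLoop (-b) a 0 (2 * π)
  rwa [neg_neg, (periodic_ellipticLoop _ _).eq, sub_self] at h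

lemma memLp_ellipticLoop (a b : V) (q : ENNReal) (s t : ℝ) :
    MemLp (ellipticLoop a b) q (volume.restrict (Ioc s t)) :=
  .of_bound (continuous_ellipticLoop a b).aestronglyMeasurable (‖a‖ + ‖b‖) <| .of_forall fun r => by
    refine (norm_add_le _ _).trans ?_
    rw [norm_smul, norm_smul]
    exact add_le_add (mul_le_of_le_one_left (norm_nonneg a) (abs_cos_le_one r))
      (mul_le_of_le_one_left (norm_nonneg b) (abs_sin_le_one r))

lemma norm_sq_ellipticLoop {W : Type*} [NormedAddCommGroup W] [InnerProductSpace ℝ W] {a b : W}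
    (hab : ⟪a, b⟫_ℝ = 0) (hnorm : ‖a‖ = ‖b‖) (t : ℝ) : ‖ellipticLoop a b t‖ ^ 2 = ‖a‖ ^ 2 := by
  rw [ellipticLoop, norm_add_sq_real, inner_smul_left, inner_smul_right, hab, norm_smul, norm_smul,
    mul_pow, mul_pow, norm_eq_abs, norm_eq_abs, sq_abs, sq_abs, ← hnorm]
  linear_combination ‖a‖ ^ 2 * cos_sq_add_sin_sq t

end EllipticLoop

section LoopSpace

variable {n : ℕ}

lemma Jmap_ellipticLoop {i j : Fin (2 * n)} (hi : i.val % 2 = 0) (hj : j.val = i.val + 1)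
    (r t : ℝ) :
    Jmap n (ellipticLoop (EuclideanSpace.single i r) (EuclideanSpace.single j r) t) =
      ellipticLoop (EuclideanSpace.single j r) (-EuclideanSpace.single i r) t := by
  ext k
  by_cases hk : k.val % 2 = 0 <;>
    simp only [Jmap, ellipticLoop, PiLp.add_apply, PiLp.neg_apply, PiLp.smul_apply,
      PiLp.single_apply, smul_eq_mul, Fin.ext_iff, hk, ↓reduceDIte] <;>
    grind

lemma exists_inE (hn : 1 ≤ n) (p : ℝ) : ∃ z dz : ℝ → E n, InE n p z dz := by
  -- The action of a circle is the area it encloses, hence the radius `1/√π`.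
  let a : E n := EuclideanSpace.single ⟨0, by lia⟩ (√π)⁻¹
  let b : E n := EuclideanSpace.single ⟨1, by lia⟩ (√π)⁻¹
  have hab : ⟪b, -a⟫_ℝ = 0 := by simp [a, b, EuclideanSpace.inner_single_left]
  have hnorm_b : ‖b‖ ^ 2 = π⁻¹ := by simp [b, sq_sqrt pi_pos.le]
  have hnorm : ‖b‖ = ‖-a‖ := by simp [a, b]
  have haction (t : ℝ) : ⟪Jmap n (ellipticLoop a b t), ellipticLoop b (-a) t⟫_ℝ = π⁻¹ := by
    rw [Jmap_ellipticLoop rfl rfl, real_inner_self_eq_norm_sq,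
      norm_sq_ellipticLoop hab hnorm, hnorm_b]
  refine ⟨ellipticLoop a b, ellipticLoop b (-a), periodic_ellipticLoop a b,
    (continuous_ellipticLoop _ _).intervalIntegrable, fun t => ?_, memLp_ellipticLoop _ _ _ _ _,
    integral_period_ellipticLoop a b, ?_⟩
  · rw [integral_ellipticLoop, add_sub_cancel]
  · simp only [haction, intervalIntegral.integral_const, smul_eq_mul]
    field_simp
    norm_num

end LoopSpace

section Capacity

variable {n : ℕ} {S K T : Set (E n)} {p : ℝ}

/-- The mean `(1/2π) ∫₀^{2π} h_S(ż(t)) dt` of the support function along the velocity `ż = dz` of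
a loop. -/
def meanSuppFn (n : ℕ) (S : Set (E n)) (dz : ℝ → E n) : ℝ :=
  (1 / (2 * π)) * ∫ t in (0:ℝ)..(2 * π), suppFn n S (dz t)

/-- The infimum of `meanSuppFn n S ż` over `z ∈ 𝓔₂`, so that `c(S) = (π · infMeanSuppFn n S)²`. -/
def infMeanSuppFn (n : ℕ) (S : Set (E n)) : ℝ :=
  sInf { r : ℝ | ∃ z dz : ℝ → E n, InE n 2 z dz ∧ r = meanSuppFn n S dz }

lemma meanSuppFn_nonneg (h0 : 0 ∈ S) (dz : ℝ → E n) : 0 ≤ meanSuppFn n S dz :=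
  mul_nonneg (by positivity) <|
    intervalIntegral.integral_nonneg (by positivity) fun t _ => suppFn_nonneg h0 (dz t)

lemma infMeanSuppFn_nonneg (h0 : 0 ∈ S) : 0 ≤ infMeanSuppFn n S := by
  refine Real.sInf_nonneg ?_
  rintro _ ⟨z, dz, -, rfl⟩
  exact meanSuppFn_nonneg h0 dz

lemma infMeanSuppFn_le (h0 : 0 ∈ S) {z dz : ℝ → E n} (hz : InE n 2 z dz) :
    infMeanSuppFn n S ≤ meanSuppFn n S dz := by
  refine csInf_le ⟨0, ?_⟩ ⟨z, dz, hz, rfl⟩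
  rintro _ ⟨w, dw, -, rfl⟩
  exact meanSuppFn_nonneg h0 dw

lemma le_infMeanSuppFn (hn : 1 ≤ n) {c : ℝ}
    (h : ∀ z dz : ℝ → E n, InE n 2 z dz → c ≤ meanSuppFn n S dz) : c ≤ infMeanSuppFn n S := by
  obtain ⟨z₀, dz₀, hz₀⟩ := exists_inE hn 2
  refine le_csInf ⟨_, z₀, dz₀, hz₀, rfl⟩ ?_
  rintro _ ⟨z, dz, hz, rfl⟩
  exact h z dz hz

lemma capacity_rpow_half (h0 : 0 ∈ S) (p : ℝ) :
    capacity n S ^ (p / 2) = π ^ p * infMeanSuppFn n S ^ p := by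
  have hinf := infMeanSuppFn_nonneg h0
  calc capacity n S ^ (p / 2) = ((π * infMeanSuppFn n S) ^ (2 : ℝ)) ^ (p / 2) := by
        rw [rpow_two]; rfl
    _ = (π * infMeanSuppFn n S) ^ p := by
        rw [← rpow_mul (by positivity), mul_div_cancel₀ p two_ne_zero]
    _ = π ^ p * infMeanSuppFn n S ^ p := mul_rpow pi_pos.le hinf

lemma pAdd_meanSuppFn_le (hp : 1 ≤ p) (hK : Bornology.IsBounded K) (hT : Bornology.IsBounded T)
    (h0K : 0 ∈ K) (h0T : 0 ∈ T) {dz : ℝ → E n} (hdz : IntervalIntegrable dz volume 0 (2 * π)) :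
    pAdd p (meanSuppFn n K dz) (meanSuppFn n T dz) ≤ meanSuppFn n (pSum n p K T) dz := by
  simp only [meanSuppFn, integral_of_le two_pi_pos.le]
  rw [pAdd_mul_left (by positivity) (by positivity) (integral_nonneg fun t => suppFn_nonneg h0K _)
    (integral_nonneg fun t => suppFn_nonneg h0T _)]
  gcongr
  exact pAdd_integral_suppFn_le hp hK hT h0K h0T hdz.1

lemma pAdd_infMeanSuppFn_le (hn : 1 ≤ n) (hp : 1 ≤ p) (hK : Bornology.IsBounded K)
    (hT : Bornology.IsBounded T) (h0K : 0 ∈ K) (h0T : 0 ∈ T) :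
    pAdd p (infMeanSuppFn n K) (infMeanSuppFn n T) ≤ infMeanSuppFn n (pSum n p K T) :=
  le_infMeanSuppFn hn fun _ dz hz => calc
    pAdd p (infMeanSuppFn n K) (infMeanSuppFn n T)
      ≤ pAdd p (meanSuppFn n K dz) (meanSuppFn n T dz) :=
        pAdd_le_pAdd (by positivity) (infMeanSuppFn_nonneg h0K) (infMeanSuppFn_nonneg h0T)
          (infMeanSuppFn_le h0K hz) (infMeanSuppFn_le h0T hz)
    _ ≤ meanSuppFn n (pSum n p K T) dz :=
        pAdd_meanSuppFn_le hp hK hT h0K h0T (hz.2.1 0 (2 * π))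

end Capacity

theorem brunn_minkowski_capacity_pSum_general {n : ℕ} (hn : 1 ≤ n) {p : ℝ} (hp : 1 ≤ p)
    {K T : Set (E n)} (hK : Bornology.IsBounded K) (hT : Bornology.IsBounded T)
    (h0K : 0 ∈ K) (h0T : 0 ∈ T) :
    capacity n K ^ (p / 2) + capacity n T ^ (p / 2) ≤ capacity n (pSum n p K T) ^ (p / 2) := by
  have hK0 := infMeanSuppFn_nonneg h0K
  have hT0 := infMeanSuppFn_nonneg h0T
  calc capacity n K ^ (p / 2) + capacity n T ^ (p / 2)
      = π ^ p * pAdd p (infMeanSuppFn n K) (infMeanSuppFn n T) ^ p := by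
        rw [capacity_rpow_half h0K, capacity_rpow_half h0T, ← mul_add,
          pAdd_rpow (by positivity) hK0 hT0]
    _ ≤ π ^ p * infMeanSuppFn n (pSum n p K T) ^ p := by
        have hnonneg : 0 ≤ pAdd p (infMeanSuppFn n K) (infMeanSuppFn n T) := pAdd_nonneg hK0 hT0
        gcongr
        exact pAdd_infMeanSuppFn_le hn hp hK hT h0K h0T
    _ = capacity n (pSum n p K T) ^ (p / 2) :=
        (capacity_rpow_half (zero_mem_pSum h0K h0T) p).symm

/-- **Brunn–Minkowski inequality for `p`-sums.**
For `n ≥ 1`, `p ≥ 1` and convex bodies `K, T ⊂ ℝ^{2n}` containing the origin,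
`c(K+ₚT)^{p/2} ≥ c(K)^{p/2} + c(T)^{p/2}`. -/
theorem brunn_minkowski_capacity_pSum (n : ℕ) (hn : 1 ≤ n) (p : ℝ) (hp : 1 ≤ p)
    (K T : Set (E n)) (hK : IsConvexBody n K) (hT : IsConvexBody n T)
    (h0K : (0 : E n) ∈ K) (h0T : (0 : E n) ∈ T) :
    capacity n (pSum n p K T) ^ (p / 2) ≥ capacity n K ^ (p / 2) + capacity n T ^ (p / 2) :=
  brunn_minkowski_capacity_pSum_general hn hp hK.1.isBounded hT.1.isBounded h0K h0T
end
end

section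
/- Let K ⊂ ℝ^{2n} be a convex body with 0 in its interior whose support function h_K and gauge function ‖·‖_K are both C¹ on ℝ^{2n}∖{0}. Let p > 1 and q = p/(p−1). Suppose z ∈ 𝓔_p satisfies the Euler equation ∇(h_K^p)(ż(t)) = (p/2)·λ·J z(t) + α for almost every t, where λ = ∫₀^{2π} h_K^p(ż(t)) dt > 0 and α ∈ ℝ^{2n}. Then the 2π-periodic curve l(t) := (2π/λ)^{1/q}·((λ/2)·J z(t) + α/p) satisfies: (i) l(t) ∈ ∂K for all t, i.e. h_{K°}(l(t)) = 1; (ii) there is a constant d > 0 with l̇(t) = d·J∇(h_{K°}^q)(l(t)), so l is a closed characteristic on ∂K; and (iii) its action satisfies 𝒜(l)^{p/2} = (1/2)·π^{p/q}·λ. -/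
open MeasureTheory Real Set Filter intervalIntegral Metric
open scoped InnerProductSpace Topology Pointwise

noncomputable section

/-!
Write `h = h_K` and `g = ‖·‖_K`. Since `⟨x, u⟩ ≤ g(x) h(u)`, Young's inequality makes `g^q / q` and
`h^p / p` Legendre dual, so the Euler equation `∇(h^p)(ż) = p m` for `m = (λ/2) J z + α/p` inverts
to `∇(g^q)(m) = q ż`. As `g^q` is `C¹` on the whole space, `ż` has a continuous version, and `m`
solves the Hamiltonian system `ṁ = (λ/(2q)) J∇(g^q)(m)`. Energy is conserved along `m`, and
integrating `h^p(ż) = g^q(m)` over a period identifies the energy as `λ/(2π)`. The dilation by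
`(2π/λ)^{1/q}` moves `m` to the level `g = 1`, where Euler's identity for the `q`-homogeneous
function `g^q` gives the action.
-/

section ChainRule

variable {𝕜 X Y Z : Type*} [RCLike 𝕜] [NormedAddCommGroup X] [NormedSpace 𝕜 X]
  [NormedAddCommGroup Y] [NormedSpace 𝕜 Y] [NormedAddCommGroup Z] [NormedSpace 𝕜 Z]

theorem hasFDerivAt_comp_of_hasFDerivAt_zero {φ : Y → Z} {f : X → Y} {a : X}
    (hφ : HasFDerivAt φ (0 : Y →L[𝕜] Z) (f a)) (hfa : ContinuousAt f a)
    (hf : (fun x ↦ f x - f a) =O[𝓝 a] fun x ↦ x - a) :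
    HasFDerivAt (fun x ↦ φ (f x)) (0 : X →L[𝕜] Z) a := by
  have hφo : (fun x ↦ φ (f x) - φ (f a)) =o[𝓝 a] fun x ↦ f x - f a := by
    simpa [Function.comp_def] using hφ.isLittleO.comp_tendsto hfa
  exact .of_isLittleO (by simpa using hφo.trans_isBigO hf)

theorem contDiff_one_comp_of_fderiv_eq_zero {φ : Y → Z} {f : X → Y} {a : X} {C : NNReal}
    (hφ : ContDiff 𝕜 1 φ) (hφa : fderiv 𝕜 φ (f a) = 0) (hf : LipschitzWith C f)
    (hfa : ContDiffOn 𝕜 1 f {a}ᶜ) : ContDiff 𝕜 1 (fun x ↦ φ (f x)) := by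
  have hderiv : ∀ x, HasFDerivAt (fun x ↦ φ (f x)) (fderiv 𝕜 φ (f x) ∘L fderiv 𝕜 f x) x := by
    intro x
    rcases eq_or_ne x a with rfl | hx
    · rw [hφa, ContinuousLinearMap.zero_comp]
      refine hasFDerivAt_comp_of_hasFDerivAt_zero ?_ hf.continuous.continuousAt
        (.of_bound C (.of_forall fun y ↦ hf.norm_sub_le y x))
      exact hφa ▸ (hφ.differentiable one_ne_zero (f x)).hasFDerivAt
    · have hfx : DifferentiableAt 𝕜 f x :=
        (hfa.contDiffAt (isOpen_compl_singleton.mem_nhds hx)).differentiableAt one_ne_zero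
      exact (hφ.differentiable one_ne_zero (f x)).hasFDerivAt.comp x hfx.hasFDerivAt
  have hφ' : Continuous fun x ↦ fderiv 𝕜 φ (f x) :=
    (hφ.continuous_fderiv one_ne_zero).comp hf.continuous
  refine contDiff_one_iff_fderiv.2 ⟨fun x ↦ (hderiv x).differentiableAt, ?_⟩
  rw [funext fun x ↦ (hderiv x).fderiv]
  refine continuous_iff_continuousAt.2 fun x ↦ ?_
  rcases eq_or_ne x a with rfl | hx
  · have hbound : Tendsto (fun y ↦ ‖fderiv 𝕜 φ (f y)‖ * C) (𝓝 x) (𝓝 0) := by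
      simpa [hφa] using (hφ'.norm.tendsto x).mul_const (C : ℝ)
    rw [ContinuousAt, hφa, ContinuousLinearMap.zero_comp]
    refine squeeze_zero_norm (fun y ↦ (ContinuousLinearMap.opNorm_comp_le _ _).trans ?_) hbound
    gcongr
    exact norm_fderiv_le_of_lipschitz 𝕜 hf
  · have hf' : ContinuousAt (fderiv 𝕜 f) x :=
      (hfa.continuousOn_fderiv_of_isOpen isOpen_compl_singleton le_rfl).continuousAt
        (isOpen_compl_singleton.mem_nhds hx)
    exact hφ'.continuousAt.clm_comp hf'

end ChainRule

theorem contDiff_one_rpow_of_lipschitzWith {X : Type*} [NormedAddCommGroup X] [NormedSpace ℝ X]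
    {f : X → ℝ} {a : X} {C : NNReal} {r : ℝ} (hr : 1 < r) (hf : LipschitzWith C f)
    (hfa : ContDiffOn ℝ 1 f {a}ᶜ) (ha : f a = 0) : ContDiff ℝ 1 (fun x ↦ f x ^ r) := by
  refine contDiff_one_comp_of_fderiv_eq_zero (φ := (· ^ r))
    (mod_cast contDiff_rpow_const_of_le (n := 1) (by simpa using hr.le)) ?_ hf hfa
  ext
  simp [ha, Real.deriv_rpow_const, zero_rpow (sub_pos.2 hr).ne']

section Gradient

variable {V : Type*} [NormedAddCommGroup V] [InnerProductSpace ℝ V] [CompleteSpace V]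

theorem continuous_gradient {f : V → ℝ} (hf : ContDiff ℝ 1 f) : Continuous (gradient f) :=
  (InnerProductSpace.toDual ℝ V).symm.continuous.comp (hf.continuous_fderiv one_ne_zero)

theorem gradient_eq_smul_of_inner_le {f : V → ℝ} {u x : V} {a b : ℝ} (ha : 0 < a)
    (hf : DifferentiableAt ℝ f u) (hle : ∀ v, ⟪x, v⟫_ℝ ≤ f v / a + b)
    (heq : ⟪x, u⟫_ℝ = f u / a + b) : gradient f u = a • x := by
  have hmin : IsLocalMin (fun v ↦ f v - innerSL ℝ (a • x) v) u := .of_forall fun v ↦ by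
    have hv : ⟪x, v⟫_ℝ - ⟪x, u⟫_ℝ ≤ (f v - f u) / a := by
      rw [sub_div]
      linarith [hle v]
    rw [le_div_iff₀ ha] at hv
    simp only [innerSL_apply_apply, real_inner_smul_left]
    linarith
  have hzero := hmin.hasFDerivAt_eq_zero (hf.hasFDerivAt.sub (innerSL ℝ (a • x)).hasFDerivAt)
  refine ext_inner_right ℝ fun v ↦ ?_
  rw [inner_gradient_left, sub_eq_zero.1 hzero, innerSL_apply_apply]

theorem gradient_smul_of_homogeneous {f : V → ℝ} {k a : ℝ} (hk : k ≠ 0)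
    (hf : ∀ x, f (k • x) = a * f x) (x : V) :
    gradient f (k • x) = (a / k) • gradient f x := by
  have hfderiv : k • fderiv ℝ f (k • x) = a • fderiv ℝ f x := by
    rw [← fderiv_comp_smul, funext hf]
    exact congrFun (fderiv_const_smul_field a) x
  refine ext_inner_right ℝ fun v ↦ ?_
  have hv := DFunLike.congr_fun hfderiv v
  simp only [_root_.smul_apply, smul_eq_mul] at hv
  rw [real_inner_smul_left, inner_gradient_left, inner_gradient_left]
  field_simp
  linarith

theorem inner_gradient_self_of_homogeneous {f : V → ℝ} {q : ℝ} {x : V}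
    (hf : DifferentiableAt ℝ f x) (hhom : ∀ t : ℝ, 0 < t → f (t • x) = t ^ q * f x) :
    ⟪gradient f x, x⟫_ℝ = q * f x := by
  have hray : HasDerivAt (fun t : ℝ ↦ t • x) x 1 := by
    simpa using (hasDerivAt_id (1 : ℝ)).smul_const x
  have hcomp : HasDerivAt (fun t : ℝ ↦ f (t • x)) (fderiv ℝ f x x) 1 :=
    HasFDerivAt.comp_hasDerivAt (l := f) 1 (by simpa using hf.hasFDerivAt) hray
  have hpow : HasDerivAt (fun t : ℝ ↦ t ^ q * f x) (q * f x) 1 := by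
    simpa using (hasDerivAt_rpow_const (.inl one_ne_zero)).mul_const (f x)
  have hloc : (fun t : ℝ ↦ f (t • x)) =ᶠ[𝓝 1] fun t ↦ t ^ q * f x := by
    filter_upwards [lt_mem_nhds one_pos] with t ht using hhom t ht
  rw [inner_gradient_left]
  exact hcomp.unique (hpow.congr_of_eventuallyEq hloc)

end Gradient

section SupportFunction

variable {V : Type*} [NormedAddCommGroup V] [InnerProductSpace ℝ V] {K : Set V} {p q : ℝ}

/-- The support function `u ↦ sup_{x ∈ K} ⟨x, u⟩` of a set in an arbitrary real inner product space,
of which `suppFn` is the case of `ℝ^{2n}`. -/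
def supportFunction (K : Set V) (u : V) : ℝ :=
  sSup ((fun x ↦ ⟪x, u⟫_ℝ) '' K)

theorem suppFn_eq_supportFunction (n : ℕ) (K : Set (E n)) : suppFn n K = supportFunction K :=
  rfl

theorem supportFunction_zero (K : Set V) : supportFunction K 0 = 0 := by
  rcases K.eq_empty_or_nonempty with rfl | hK
  · simp [supportFunction]
  · simp [supportFunction, hK.image_const]

theorem inner_le_supportFunction (hK : Bornology.IsBounded K) {x : V} (hx : x ∈ K) (u : V) :
    ⟪x, u⟫_ℝ ≤ supportFunction K u := by
  obtain ⟨C, hC⟩ := hK.exists_norm_le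
  refine le_csSup ⟨C * ‖u‖, ?_⟩ (mem_image_of_mem _ hx)
  rintro _ ⟨y, hy, rfl⟩
  exact (real_inner_le_norm y u).trans (by gcongr; exact hC y hy)

theorem supportFunction_nonneg (hK : Bornology.IsBounded K) (h0 : 0 ∈ K) (u : V) :
    0 ≤ supportFunction K u := by
  simpa using inner_le_supportFunction hK h0 u

theorem exists_inner_eq_supportFunction (hK : IsCompact K) (hne : K.Nonempty) (u : V) :
    ∃ x ∈ K, ⟪x, u⟫_ℝ = supportFunction K u :=
  (hK.image (f := fun x ↦ ⟪x, u⟫_ℝ) (by fun_prop)).sSup_mem (hne.image _)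

theorem exists_lipschitzWith_supportFunction (hK : Bornology.IsBounded K) (hne : K.Nonempty) :
    ∃ C, LipschitzWith C (supportFunction K) := by
  obtain ⟨C, hC⟩ := hK.exists_norm_le
  refine ⟨_, LipschitzWith.of_le_add_mul' C fun u v ↦ csSup_le (hne.image _) ?_⟩
  rintro _ ⟨x, hx, rfl⟩
  calc ⟪x, u⟫_ℝ = ⟪x, v⟫_ℝ + ⟪x, u - v⟫_ℝ := by rw [← inner_add_right, add_sub_cancel]
    _ ≤ supportFunction K v + C * dist u v := by
      rw [dist_eq_norm]
      gcongr
      · exact inner_le_supportFunction hK hx v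
      · exact (real_inner_le_norm x _).trans (by gcongr; exact hC x hx)

theorem inner_le_gauge_mul_supportFunction (hK : Bornology.IsBounded K) (h0 : K ∈ 𝓝 0) (x u : V) :
    ⟪x, u⟫_ℝ ≤ gauge K x * supportFunction K u := by
  have hnonneg := supportFunction_nonneg hK (mem_of_mem_nhds h0) u
  have hlt : ∀ a, gauge K x < a → ⟪x, u⟫_ℝ ≤ a * supportFunction K u := by
    intro a ha
    obtain ⟨b, hb0, hba, y, hy, rfl⟩ := exists_lt_of_gauge_lt (absorbent_nhds_zero h0) ha
    calc ⟪b • y, u⟫_ℝ = b * ⟪y, u⟫_ℝ := real_inner_smul_left ..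
      _ ≤ b * supportFunction K u := by gcongr; exact inner_le_supportFunction hK hy u
      _ ≤ a * supportFunction K u := by gcongr
  refine ge_of_tendsto (f := fun a ↦ a * supportFunction K u) (x := 𝓝[>] gauge K x) ?_
    (eventually_nhdsWithin_of_forall hlt)
  exact (tendsto_id.mono_left nhdsWithin_le_nhds).mul_const _

theorem inner_le_gauge_rpow_div_add (hpq : p.HolderConjugate q) (hK : Bornology.IsBounded K)
    (h0 : K ∈ 𝓝 0) (x u : V) :
    ⟪x, u⟫_ℝ ≤ gauge K x ^ q / q + supportFunction K u ^ p / p :=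
  (inner_le_gauge_mul_supportFunction hK h0 x u).trans <|
    young_inequality_of_nonneg (gauge_nonneg x)
      (supportFunction_nonneg hK (mem_of_mem_nhds h0) u) hpq.symm

theorem exists_gauge_rpow_eq_supportFunction_rpow (hpq : p.HolderConjugate q) (hK : IsCompact K)
    (h0 : K ∈ 𝓝 0) (u : V) :
    ∃ m, gauge K m ^ q = supportFunction K u ^ p ∧ ⟪m, u⟫_ℝ = supportFunction K u ^ p := by
  have h0K := mem_of_mem_nhds h0
  have hs := supportFunction_nonneg hK.isBounded h0K u
  obtain ⟨x, hxK, hxu⟩ := exists_inner_eq_supportFunction hK ⟨0, h0K⟩ u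
  set s := supportFunction K u
  have hinner : ⟪s ^ (p - 1) • x, u⟫_ℝ = s ^ p := by
    rw [real_inner_smul_left, hxu, ← rpow_add_one' hs (by simpa using hpq.ne_zero), sub_add_cancel]
  have hle : gauge K (s ^ (p - 1) • x) ^ q ≤ s ^ p :=
    calc gauge K (s ^ (p - 1) • x) ^ q = (s ^ (p - 1) * gauge K x) ^ q := by
          rw [gauge_smul_of_nonneg (rpow_nonneg hs _), smul_eq_mul]
      _ ≤ (s ^ (p - 1)) ^ q := by
          gcongr
          · exact mul_nonneg (rpow_nonneg hs _) (gauge_nonneg x)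
          · exact hpq.symm.nonneg
          · exact mul_le_of_le_one_right (rpow_nonneg hs _) (gauge_le_one_of_mem hxK)
      _ = s ^ p := by rw [← rpow_mul hs, hpq.sub_one_mul_conj]
  refine ⟨s ^ (p - 1) • x, hle.antisymm ?_, hinner⟩
  have hyoung := inner_le_gauge_rpow_div_add hpq hK.isBounded h0 (s ^ (p - 1) • x) u
  have hsplit : s ^ p = s ^ p / q + s ^ p / p := by
    rw [div_eq_mul_inv, div_eq_mul_inv, ← mul_add, hpq.symm.inv_add_inv_eq_one, mul_one]
  rw [hinner] at hyoung
  exact (div_le_div_iff_of_pos_right hpq.symm.pos).1 (by linarith)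

theorem gradient_gauge_rpow_of_gradient_supportFunction_rpow [CompleteSpace V]
    (hpq : p.HolderConjugate q) (hK : IsCompact K) (h0 : K ∈ 𝓝 0)
    (hsupp : Differentiable ℝ fun u ↦ supportFunction K u ^ p)
    (hgauge : Differentiable ℝ fun x ↦ gauge K x ^ q) {u m : V}
    (hm : gradient (fun u ↦ supportFunction K u ^ p) u = p • m) :
    gauge K m ^ q = supportFunction K u ^ p ∧ gradient (fun x ↦ gauge K x ^ q) m = q • u := by
  obtain ⟨y, hy, hyu⟩ := exists_gauge_rpow_eq_supportFunction_rpow hpq hK h0 u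
  have hyoung := inner_le_gauge_rpow_div_add hpq hK.isBounded h0
  have hequality : ⟪y, u⟫_ℝ = gauge K y ^ q / q + supportFunction K u ^ p / p := by
    rw [hyu, hy, div_eq_mul_inv, div_eq_mul_inv, ← mul_add, hpq.symm.inv_add_inv_eq_one, mul_one]
  have hgrad_supp : gradient (fun u ↦ supportFunction K u ^ p) u = p • y :=
    gradient_eq_smul_of_inner_le hpq.pos (hsupp u) (fun v ↦ add_comm (_ / q) _ ▸ hyoung y v)
      (add_comm (_ / q) _ ▸ hequality)
  have hgrad_gauge : gradient (fun x ↦ gauge K x ^ q) y = q • u :=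
    gradient_eq_smul_of_inner_le hpq.symm.pos (hgauge y)
      (fun x ↦ real_inner_comm u x ▸ hyoung x u) (real_inner_comm u y ▸ hequality)
  obtain rfl : m = y := smul_right_injective V hpq.ne_zero (hm.symm.trans hgrad_supp)
  exact ⟨hy, hgrad_gauge⟩

theorem contDiff_one_supportFunction_rpow (hp : 1 < p) (hK : Bornology.IsBounded K)
    (hne : K.Nonempty) (hsupp : ContDiffOn ℝ 1 (supportFunction K) {0}ᶜ) :
    ContDiff ℝ 1 fun u ↦ supportFunction K u ^ p :=
  have ⟨_, hLip⟩ := exists_lipschitzWith_supportFunction hK hne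
  contDiff_one_rpow_of_lipschitzWith hp hLip hsupp (supportFunction_zero K)

theorem contDiff_one_gauge_rpow (hq : 1 < q) (hK : Convex ℝ K) (h0 : K ∈ 𝓝 0)
    (hgauge : ContDiffOn ℝ 1 (gauge K) {0}ᶜ) : ContDiff ℝ 1 fun x ↦ gauge K x ^ q :=
  have ⟨_, hLip⟩ := hK.lipschitz_gauge h0
  contDiff_one_rpow_of_lipschitzWith hq hLip hgauge gauge_zero

theorem gauge_smul_rpow (K : Set V) (q : ℝ) {k : ℝ} (hk : 0 ≤ k) (x : V) :
    gauge K (k • x) ^ q = k ^ q * gauge K x ^ q := by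
  rw [gauge_smul_of_nonneg hk, smul_eq_mul, mul_rpow hk (gauge_nonneg x)]

end SupportFunction

section PeriodicPrimitive

variable {X : Type*} [NormedAddCommGroup X] [NormedSpace ℝ X] {z dz g : ℝ → X} {T : ℝ}

theorem periodic_primitive (hg : Continuous g) (hper : Function.Periodic g T)
    (hzero : ∫ s in (0 : ℝ)..T, g s = 0) :
    Function.Periodic (fun t ↦ ∫ s in (0 : ℝ)..t, g s) T := by
  intro t
  have h := hper.intervalIntegral_add_eq_add 0 t fun _ _ ↦ hg.intervalIntegrable _ _
  simpa [hzero] using h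

theorem hasDerivAt_of_periodic_of_ae_eq [CompleteSpace X] (hT : 0 < T) (hz : Function.Periodic z T)
    (hprim : ∀ t, z t = z 0 + ∫ s in (0 : ℝ)..t, dz s) (hg : Continuous g)
    (hper : Function.Periodic g T) (hae : dz =ᵐ[volume.restrict (Ioc 0 T)] g) (t : ℝ) :
    HasDerivAt z (g t) t := by
  have hIcc : ∀ t ∈ Icc 0 T, z t = z 0 + ∫ s in (0 : ℝ)..t, g s := by
    intro t ht
    rw [hprim t, integral_of_le ht.1, integral_of_le ht.1]
    congr 1
    exact integral_congr_ae (ae_restrict_of_ae_restrict_of_subset (Ioc_subset_Ioc_right ht.2) hae)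
  have hzero : ∫ s in (0 : ℝ)..T, g s = 0 := by
    simpa [hz.eq] using hIcc T (right_mem_Icc.2 hT.le)
  have hz_eq : z = fun t ↦ z 0 + ∫ s in (0 : ℝ)..t, g s := by
    funext t
    have hdiff : Function.Periodic (fun t ↦ z t - (z 0 + ∫ s in (0 : ℝ)..t, g s)) T := fun t ↦ by
      simp only [hz t, periodic_primitive hg hper hzero t]
    obtain ⟨s, hs, hts⟩ := hdiff.exists_mem_Ico₀ hT t
    exact sub_eq_zero.1 (hts.trans (sub_eq_zero.2 (hIcc s (Ico_subset_Icc_self hs))))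
  rw [hz_eq]
  exact (integral_hasDerivAt_right (hg.intervalIntegrable 0 t)
    hg.aestronglyMeasurable.stronglyMeasurableAtFilter hg.continuousAt).const_add _

end PeriodicPrimitive

section HamiltonianCurve

variable {V : Type*} [NormedAddCommGroup V] [InnerProductSpace ℝ V] [CompleteSpace V]

/-- `γ` solves the Hamiltonian system `γ' = c · J∇H(γ)`. The factor `c` is kept apart from `H`
because a dilation of `γ` solves the same system with another factor when `H` is homogeneous. -/
def IsHamiltonianCurve (J : V →L[ℝ] V) (H : V → ℝ) (c : ℝ) (γ : ℝ → V) : Prop :=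
  ∀ t, HasDerivAt γ (c • J (gradient H (γ t))) t

namespace IsHamiltonianCurve

variable {J : V →L[ℝ] V} {H : V → ℝ} {c : ℝ} {γ : ℝ → V}

theorem energy_eq (hγ : IsHamiltonianCurve J H c γ) (hJ : ∀ v, ⟪v, J v⟫_ℝ = 0)
    (hH : Differentiable ℝ H) (s t : ℝ) : H (γ s) = H (γ t) := by
  have hderiv : ∀ t, HasDerivAt (fun t ↦ H (γ t)) 0 t := by
    intro t
    have h := (hH (γ t)).hasFDerivAt.comp_hasDerivAt t (hγ t)
    rwa [← inner_gradient_left, real_inner_smul_right, hJ, mul_zero] at h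
  exact is_const_of_deriv_eq_zero (fun t ↦ (hderiv t).differentiableAt)
    (fun t ↦ (hderiv t).deriv) s t

theorem const_smul (hγ : IsHamiltonianCurve J H c γ) {k a : ℝ} (hk : k ≠ 0) (ha : a ≠ 0)
    (hH : ∀ x, H (k • x) = a * H x) :
    IsHamiltonianCurve J H (k ^ 2 / a * c) (fun t ↦ k • γ t) := by
  intro t
  refine ((hγ t).fun_const_smul k).congr_deriv ?_
  rw [gradient_smul_of_homogeneous hk hH, map_smul, smul_smul, smul_smul]
  congr 1
  field_simp

end IsHamiltonianCurve

variable {K : Set V} {p q T c : ℝ} {J : V →L[ℝ] V} {z dz : ℝ → V} {β : V}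

theorem isHamiltonianCurve_of_euler (hpq : p.HolderConjugate q) (hK : IsCompact K) (h0 : K ∈ 𝓝 0)
    (hsupp : Differentiable ℝ fun u ↦ supportFunction K u ^ p)
    (hgauge : ContDiff ℝ 1 fun x ↦ gauge K x ^ q) (hT : 0 < T) (hz : Function.Periodic z T)
    (hint : ∀ a b, IntervalIntegrable dz volume a b)
    (hprim : ∀ t, z t = z 0 + ∫ s in (0 : ℝ)..t, dz s)
    (heuler : ∀ᵐ t ∂volume.restrict (Ioc 0 T),
      gradient (fun u ↦ supportFunction K u ^ p) (dz t) = p • (c • J (z t) + β)) :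
    IsHamiltonianCurve J (fun x ↦ gauge K x ^ q) (c / q) (fun t ↦ c • J (z t) + β) := by
  set g : ℝ → V := fun t ↦ q⁻¹ • gradient (fun x ↦ gauge K x ^ q) (c • J (z t) + β)
  have hz_cont : Continuous z := by
    rw [funext hprim]
    exact continuous_const.add (continuous_primitive hint 0)
  have hg_cont : Continuous g := by
    have := continuous_gradient hgauge
    fun_prop
  have hg_per : Function.Periodic g T := fun t ↦ by simp only [g, hz t]
  have hae : dz =ᵐ[volume.restrict (Ioc 0 T)] g := by
    filter_upwards [heuler] with t ht
    have := (gradient_gauge_rpow_of_gradient_supportFunction_rpow hpq hK h0 hsupp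
      (hgauge.differentiable one_ne_zero) ht).2
    simp only [g, this, inv_smul_smul₀ hpq.symm.ne_zero]
  intro t
  have hz_deriv := hasDerivAt_of_periodic_of_ae_eq hT hz hprim hg_cont hg_per hae t
  refine (((J.hasFDerivAt.comp_hasDerivAt t hz_deriv).fun_const_smul c).add_const β).congr_deriv ?_
  rw [map_smul, smul_smul, div_eq_mul_inv]

theorem mul_gauge_rpow_eq_integral_of_euler (hpq : p.HolderConjugate q) (hK : IsCompact K)
    (h0 : K ∈ 𝓝 0) (hsupp : Differentiable ℝ fun u ↦ supportFunction K u ^ p)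
    (hgauge : Differentiable ℝ fun x ↦ gauge K x ^ q) (hJ : ∀ v, ⟪v, J v⟫_ℝ = 0) (hT : 0 ≤ T)
    {m : ℝ → V} (hm : IsHamiltonianCurve J (fun x ↦ gauge K x ^ q) c m)
    (heuler : ∀ᵐ t ∂volume.restrict (Ioc 0 T),
      gradient (fun u ↦ supportFunction K u ^ p) (dz t) = p • m t) (t : ℝ) :
    T * gauge K (m t) ^ q = ∫ s in (0 : ℝ)..T, supportFunction K (dz s) ^ p := by
  have hae : ∀ᵐ s ∂volume.restrict (Ioc 0 T),
      supportFunction K (dz s) ^ p = gauge K (m t) ^ q := by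
    filter_upwards [heuler] with s hs
    rw [hm.energy_eq hJ hgauge t s,
      (gradient_gauge_rpow_of_gradient_supportFunction_rpow hpq hK h0 hsupp hgauge hs).1]
  rw [integral_of_le hT, integral_congr_ae hae, ← integral_of_le hT]
  simp

theorem isHamiltonianCurve_smul_and_gauge_eq_one_of_euler (hpq : p.HolderConjugate q)
    (hK : IsCompact K) (h0 : K ∈ 𝓝 0) (hsupp : Differentiable ℝ fun u ↦ supportFunction K u ^ p)
    (hgauge : ContDiff ℝ 1 fun x ↦ gauge K x ^ q) (hJ : ∀ v, ⟪v, J v⟫_ℝ = 0) (hT : 0 < T)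
    (hz : Function.Periodic z T) (hint : ∀ a b, IntervalIntegrable dz volume a b)
    (hprim : ∀ t, z t = z 0 + ∫ s in (0 : ℝ)..t, dz s)
    (heuler : ∀ᵐ t ∂volume.restrict (Ioc 0 T),
      gradient (fun u ↦ supportFunction K u ^ p) (dz t) = p • (c • J (z t) + β))
    {k : ℝ} (hk : 0 < k) (hkq : k ^ q * ∫ t in (0 : ℝ)..T, supportFunction K (dz t) ^ p = T) :
    IsHamiltonianCurve J (fun x ↦ gauge K x ^ q) (k ^ 2 / k ^ q * (c / q))
        (fun t ↦ k • (c • J (z t) + β)) ∧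
      ∀ t, gauge K (k • (c • J (z t) + β)) = 1 := by
  have hm := isHamiltonianCurve_of_euler hpq hK h0 hsupp hgauge hT hz hint hprim heuler
  have hdil := gauge_smul_rpow K q hk.le
  refine ⟨hm.const_smul hk.ne' (rpow_pos_of_pos hk q).ne' hdil, fun t ↦ ?_⟩
  have hlevel : gauge K (k • (c • J (z t) + β)) ^ q = 1 := by
    refine mul_left_cancel₀ hT.ne' ?_
    rw [hdil, mul_left_comm, mul_gauge_rpow_eq_integral_of_euler hpq hK h0 hsupp
      (hgauge.differentiable one_ne_zero) hJ hT.le hm heuler, hkq, mul_one]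
  rwa [← one_rpow q, rpow_left_inj (gauge_nonneg _) zero_le_one hpq.symm.ne_zero] at hlevel

end HamiltonianCurve

section ComplexStructure

variable {n : ℕ}

/-- The index of the coordinate conjugate to the `i`-th one: as indices start at `0`, `J` exchanges
`2k` and `2k + 1` up to sign. -/
def conjIndex (i : Fin (2 * n)) : Fin (2 * n) :=
  if _h : i.val % 2 = 0 then ⟨i.val + 1, by omega⟩ else ⟨i.val - 1, by omega⟩

theorem conjIndex_conjIndex (i : Fin (2 * n)) : conjIndex (conjIndex i) = i := by
  unfold conjIndex
  grind

theorem conjIndex_ne (i : Fin (2 * n)) : conjIndex i ≠ i := by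
  unfold conjIndex
  grind

theorem neg_one_pow_conjIndex (i : Fin (2 * n)) :
    (-1 : ℝ) ^ (conjIndex i).val = -(-1) ^ i.val := by
  unfold conjIndex
  split_ifs with h
  · exact pow_succ' .. |>.trans (neg_one_mul _)
  · obtain ⟨k, hk⟩ : ∃ k, i.val = k + 1 := ⟨i.val - 1, by omega⟩
    simp [hk, pow_succ]

theorem Jmap_apply (v : E n) (i : Fin (2 * n)) :
    Jmap n v i = -(-1) ^ i.val * v (conjIndex i) := by
  unfold conjIndex
  split_ifs with h
  · simp [Jmap, h, (Nat.even_iff.2 h).neg_one_pow]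
  · simp [Jmap, h, (Nat.not_even_iff_odd.1 (mt Nat.even_iff.1 h)).neg_one_pow]

/-- The complex structure `Jmap n` bundled as a continuous linear map. -/
def complexStructure (n : ℕ) : E n →L[ℝ] E n :=
  LinearMap.toContinuousLinearMap
    { toFun := Jmap n
      map_add' := fun u v ↦ by ext i; simp [Jmap_apply, mul_add]
      map_smul' := fun c v ↦ by ext i; simp [Jmap_apply, mul_left_comm] }

theorem complexStructure_apply (v : E n) : complexStructure n v = Jmap n v :=
  rfl

theorem Jmap_Jmap (v : E n) : Jmap n (Jmap n v) = -v := by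
  ext i
  simp [Jmap_apply, conjIndex_conjIndex, neg_one_pow_conjIndex, ← mul_assoc, ← pow_add]

theorem inner_complexStructure_self (v : E n) : ⟪v, complexStructure n v⟫_ℝ = 0 := by
  rw [PiLp.inner_apply]
  refine Finset.sum_ninvolution conjIndex (fun i ↦ ?_) (fun i _ ↦ conjIndex_ne i)
    (fun _ ↦ Finset.mem_univ _) conjIndex_conjIndex
  simp only [complexStructure_apply, Jmap_apply, conjIndex_conjIndex, neg_one_pow_conjIndex,
    RCLike.inner_apply, conj_trivial]
  ring

theorem action_of_isHamiltonianCurve {H : E n → ℝ} {d q e T : ℝ} {γ : ℝ → E n}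
    (hγ : IsHamiltonianCurve (complexStructure n) H d γ) (he : ∀ t, H (γ t) = e)
    (hH : ∀ x, ⟪gradient H x, x⟫_ℝ = q * H x) : action n γ T = T * (d * q * e) / 2 := by
  have hintegrand : ∀ t, ⟪-Jmap n (deriv γ t), γ t⟫_ℝ = d * q * e := by
    intro t
    rw [(hγ t).deriv, ← complexStructure_apply, map_smul, complexStructure_apply,
      complexStructure_apply, Jmap_Jmap, smul_neg, neg_neg, real_inner_smul_left, hH, he, mul_assoc]
  simp only [action, hintegrand, intervalIntegral.integral_const, sub_zero, smul_eq_mul]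
  ring

end ComplexStructure

theorem action_rpow_eq {p q lam k : ℝ} (hpq : p.HolderConjugate q) (hlam : 0 < lam) (hk : 0 < k)
    (hkq : k ^ q = 2 * π / lam) :
    (2 * π * (k ^ 2 / k ^ q * (lam / 2 / q) * q * 1) / 2) ^ (p / 2) =
      1 / 2 * π ^ (p / q) * lam := by
  have hq := hpq.symm.pos
  have hkp : k ^ p = (2 * π / lam) ^ (p - 1) := by
    rw [← hkq, ← rpow_mul hk.le, mul_comm, hpq.sub_one_mul_conj]
  have hsq : 2 * π * (k ^ 2 / k ^ q * (lam / 2 / q) * q * 1) / 2 = (k * (lam / 2)) ^ 2 := by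
    rw [hkq]
    field_simp
  calc (2 * π * (k ^ 2 / k ^ q * (lam / 2 / q) * q * 1) / 2) ^ (p / 2)
      = (k * (lam / 2)) ^ p := by
        rw [hsq, ← rpow_natCast_mul (by positivity)]
        congr 1
        push_cast
        ring
    _ = (2 * π / lam) ^ (p - 1) * ((lam / 2) ^ (p - 1) * (lam / 2)) := by
        rw [mul_rpow hk.le (by positivity), hkp, ← rpow_add_one (by positivity), sub_add_cancel]
    _ = (2 * π / lam * (lam / 2)) ^ (p - 1) * (lam / 2) := by
        rw [mul_rpow (x := 2 * π / lam) (by positivity) (by positivity), mul_assoc]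
    _ = 1 / 2 * π ^ (p / q) * lam := by
        rw [hpq.div_conj_eq_sub_one, show 2 * π / lam * (lam / 2) = π by field_simp]
        ring

/-- From a solution `z ∈ 𝓔_p` of the Euler equation, the affine image
`l(t) = (2π/λ)^{1/q}·((λ/2)·Jz(t) + α/p)` lies on `∂K`, is a closed characteristic
(for the Hamiltonian `h_{K°}^q = ‖·‖_K^q`), and `𝒜(l)^{p/2} = (1/2)·π^{p/q}·λ`. -/
theorem euler_solution_gives_characteristic (n : ℕ) (K : Set (E n)) (hK : IsConvexBody n K)
    (h0 : (0 : E n) ∈ interior K)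
    (hsupp : ContDiffOn ℝ 1 (suppFn n K) {(0 : E n)}ᶜ)
    (hgauge : ContDiffOn ℝ 1 (gauge K) {(0 : E n)}ᶜ)
    (p q : ℝ) (hp : 1 < p) (hq : q = p / (p - 1))
    (z dz : ℝ → E n) (hz : InE n p z dz)
    (lam : ℝ) (hlam : lam = ∫ t in (0:ℝ)..(2 * π), suppFn n K (dz t) ^ p)
    (hlampos : 0 < lam) (α : E n)
    (heuler : ∀ᵐ t ∂(volume.restrict (Set.Ioc (0:ℝ) (2 * π))),
      gradient (fun u => suppFn n K u ^ p) (dz t) = (p / 2 * lam) • Jmap n (z t) + α)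
    (l : ℝ → E n)
    (hl : ∀ t, l t = ((2 * π / lam) ^ (1 / q)) • ((lam / 2) • Jmap n (z t) + (1 / p) • α)) :
    (∀ t, gauge K (l t) = 1 ∧ l t ∈ frontier K) ∧
    (∃ d : ℝ, 0 < d ∧
      ∀ t, deriv l t = d • Jmap n (gradient (fun x => gauge K x ^ q) (l t))) ∧
    action n l (2 * π) ^ (p / 2) = 1 / 2 * π ^ (p / q) * lam := by
  obtain ⟨hKc, hconv, -⟩ := hK
  obtain ⟨hper, hint, hprim, -⟩ := hz
  have hpq : p.HolderConjugate q := hq ▸ .conjExponent hp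
  have hq0 := hpq.symm.pos
  have h0n : K ∈ 𝓝 0 := mem_interior_iff_mem_nhds.1 h0
  rw [suppFn_eq_supportFunction] at hsupp heuler hlam
  have hF := contDiff_one_supportFunction_rpow hp hKc.isBounded ⟨0, interior_subset h0⟩ hsupp
  have hG := contDiff_one_gauge_rpow hpq.symm.lt hconv h0n hgauge
  set k := (2 * π / lam) ^ (1 / q)
  have hk : 0 < k := by positivity
  have hkq : k ^ q = 2 * π / lam := by
    rw [← rpow_mul (by positivity), one_div_mul_cancel hq0.ne', rpow_one]
  have hsplit (v : E n) : (p / 2 * lam) • v + α = p • ((lam / 2) • v + (1 / p) • α) := by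
    rw [smul_add, smul_smul, smul_smul, mul_one_div_cancel hpq.ne_zero, one_smul, mul_comm_div]
  obtain ⟨hchar, hone⟩ := isHamiltonianCurve_smul_and_gauge_eq_one_of_euler
    hpq hKc h0n (hF.differentiable one_ne_zero) hG inner_complexStructure_self two_pi_pos hper hint
    hprim (heuler.mono fun t ht ↦ ht.trans (hsplit _)) hk
    (by rw [hkq, ← hlam, div_mul_cancel₀ _ hlampos.ne'])
  obtain rfl : l = fun t ↦ k • ((lam / 2) • complexStructure n (z t) + (1 / p) • α) := funext hl
  refine ⟨fun t ↦ ⟨hone t, (gauge_eq_one_iff_mem_frontier hconv h0n).1 (hone t)⟩,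
    ⟨_, by positivity, fun t ↦ (hchar t).deriv⟩, ?_⟩
  rw [action_of_isHamiltonianCurve hchar (e := 1) fun t ↦ by rw [hone t, one_rpow]]
  · exact action_rpow_eq hpq hlampos hk hkq
  · exact fun x ↦ inner_gradient_self_of_homogeneous (hG.differentiable one_ne_zero x)
      fun t ht ↦ gauge_smul_rpow K q ht.le x
end
end
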